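/- arXiv:1407.1531 — 5 statements merged into one kernel-verified Lean document; each statement's English description precedes it below -/
import Mathlib

section
/- Let m ≥ 1 and let A, B be continuous linear endomorphisms of Euclidean space ℝ^m. Then for every v ∈ ℝ^m, ‖A v‖ + ‖B v‖ − 2‖v‖ ≤ (1/2)·‖A* ∘ A + B* ∘ B − 2·I‖·‖v‖, where A* denotes the Hilbert-space adjoint of A, I is the identity map, and the norm on operators is the operator norm. -/
/-!
The operator `T = ∑ i ∈ s, Aᵢ* ∘ Aᵢ - #s • 1` satisfies
`re ⟪T v, v⟫ = ∑ i ∈ s, (‖Aᵢ v‖ ^ 2 - ‖v‖ ^ 2)`. Each term is at least `2 ‖v‖ (‖Aᵢ v‖ - ‖v‖)`, since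
the difference is `(‖Aᵢ v‖ - ‖v‖) ^ 2`, while Cauchy-Schwarz bounds the left-hand side by
`‖T‖ ‖v‖ ^ 2`. Cancelling `2 ‖v‖` gives the estimate.
-/

open ContinuousLinearMap Finset

theorem two_mul_sum_sub_card_mul_mul_le {ι R : Type*} [CommRing R] [LinearOrder R]
    [IsStrictOrderedRing R] (s : Finset ι) (a : ι → R) (t : R) :
    2 * (∑ i ∈ s, a i - #s * t) * t ≤ ∑ i ∈ s, a i ^ 2 - #s * t ^ 2 := by
  have hsum : ∑ i ∈ s, 2 * a i * t ≤ ∑ i ∈ s, (a i ^ 2 + t ^ 2) :=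
    sum_le_sum fun i _ ↦ two_mul_le_add_sq (a i) t
  rw [← sum_mul, ← mul_sum, sum_add_distrib, sum_const, nsmul_eq_mul] at hsum
  linarith

section Hilbert

variable {𝕜 E ι : Type*} {F : ι → Type*} [RCLike 𝕜]
  [NormedAddCommGroup E] [InnerProductSpace 𝕜 E]
  [∀ i, NormedAddCommGroup (F i)] [∀ i, InnerProductSpace 𝕜 (F i)]

theorem re_inner_apply_self_le_opNorm_mul_norm_sq (T : E →L[𝕜] E) (v : E) :
    RCLike.re (inner 𝕜 (T v) v) ≤ ‖T‖ * ‖v‖ ^ 2 :=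
  calc RCLike.re (inner 𝕜 (T v) v) ≤ ‖T v‖ * ‖v‖ := re_inner_le_norm _ _
    _ ≤ ‖T‖ * ‖v‖ * ‖v‖ := by gcongr; exact T.le_opNorm v
    _ = ‖T‖ * ‖v‖ ^ 2 := by ring

variable [CompleteSpace E] [∀ i, CompleteSpace (F i)]

theorem re_inner_sum_adjoint_comp_sub_smul_one_apply_self
    (s : Finset ι) (A : ∀ i, E →L[𝕜] F i) (c : ℝ) (v : E) :
    RCLike.re (inner 𝕜 ((∑ i ∈ s, adjoint (A i) ∘L A i - (c : 𝕜) • (1 : E →L[𝕜] E)) v) v) =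
      ∑ i ∈ s, ‖A i v‖ ^ 2 - c * ‖v‖ ^ 2 := by
  simp only [sub_apply, _root_.sum_apply, smul_apply, one_apply_eq_self, inner_sub_left, sum_inner,
    inner_smul_left, map_sub, map_sum, RCLike.conj_ofReal, RCLike.re_ofReal_mul,
    ← apply_norm_sq_eq_inner_adjoint_left, inner_self_eq_norm_sq]

theorem norm_apply_sum_le_half_opNorm_adjoint_comp_general
    (s : Finset ι) (A : ∀ i, E →L[𝕜] F i) (v : E) :
    ∑ i ∈ s, ‖A i v‖ - #s * ‖v‖ ≤
      (1 / 2) * ‖∑ i ∈ s, adjoint (A i) ∘L A i - (#s : 𝕜) • (1 : E →L[𝕜] E)‖ * ‖v‖ := by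
  rcases eq_or_ne v 0 with rfl | hv
  · simp
  set T := ∑ i ∈ s, adjoint (A i) ∘L A i - (#s : 𝕜) • (1 : E →L[𝕜] E)
  have hform : RCLike.re (inner 𝕜 (T v) v) = ∑ i ∈ s, ‖A i v‖ ^ 2 - #s * ‖v‖ ^ 2 := by
    simpa only [RCLike.ofReal_natCast] using
      re_inner_sum_adjoint_comp_sub_smul_one_apply_self s A #s v
  have hmul : 2 * (∑ i ∈ s, ‖A i v‖ - #s * ‖v‖) * ‖v‖ ≤ ‖T‖ * ‖v‖ ^ 2 :=
    calc _ ≤ ∑ i ∈ s, ‖A i v‖ ^ 2 - #s * ‖v‖ ^ 2 :=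
        two_mul_sum_sub_card_mul_mul_le s (fun i ↦ ‖A i v‖) ‖v‖
      _ = RCLike.re (inner 𝕜 (T v) v) := hform.symm
      _ ≤ ‖T‖ * ‖v‖ ^ 2 := re_inner_apply_self_le_opNorm_mul_norm_sq T v
  refine le_of_mul_le_mul_right ?_ (norm_pos_iff.mpr hv)
  linarith

end Hilbert

/-- The crucial estimate (Lemma `biestim`):
`‖Av‖ + ‖Bv‖ - 2‖v‖ ≤ (1/2)‖A*∘A + B*∘B - 2I‖ ‖v‖`. -/
theorem norm_apply_sum_le_half_opNorm_adjoint_comp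
    (m : ℕ) (hm : 1 ≤ m)
    (A B : EuclideanSpace ℝ (Fin m) →L[ℝ] EuclideanSpace ℝ (Fin m))
    (v : EuclideanSpace ℝ (Fin m)) :
    ‖A v‖ + ‖B v‖ - 2 * ‖v‖ ≤
      (1 / 2) *
        ‖ContinuousLinearMap.adjoint A ∘L A + ContinuousLinearMap.adjoint B ∘L B -
          (2 : ℝ) • (1 : EuclideanSpace ℝ (Fin m) →L[ℝ] EuclideanSpace ℝ (Fin m))‖ * ‖v‖ := by
  simpa [Fin.sum_univ_two] using
    norm_apply_sum_le_half_opNorm_adjoint_comp_general univ ![A, B] v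
end

section
/- Let p > 1 and let a, b⁺, b⁻ ∈ ℝ with b⁺ ≠ b⁻. Then there exists θ ∈ (0,1) such that, writing w⁺ = (1−θ)·(b⁻ − a) + θ·(b⁺ − a) and w⁻ = (1−θ)·(b⁺ − a) + θ·(b⁻ − a), one has (|w⁺| − |b⁺ − a|)·|w⁺|^{p−1} + (|w⁻| − |b⁻ − a|)·|w⁻|^{p−1} < 0. -/
/-!
For `‖y‖ ≤ ‖x‖` put `u = (1 - θ) • y + θ • x` and `v = (1 - θ) • x + θ • y` with `1/2 < θ < 1`, so
that `y, v, u, x` occur in this order on the segment from `y` to `x`. Strict convexity of the norm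
gives `‖u‖ < ‖x‖`, so the `u`-term is negative. The `v`-term can be positive only if `‖y‖ < ‖v‖`;
then the convex function `‖·‖` is already increasing past `v`, so `‖v‖ < ‖u‖` and the `v`-term
carries the smaller weight. Since `‖u‖ + ‖v‖ ≤ ‖x‖ + ‖y‖`, it cannot compensate the `u`-term.
-/

open Set

theorem sub_mul_add_sub_mul_neg {R : Type*} [CommRing R] [LinearOrder R] [IsStrictOrderedRing R]
    {u v x y A B : R} (hux : u < x) (hsum : u + v ≤ x + y) (hA : 0 < A) (hB : 0 ≤ B)
    (hBA : y < v → B < A) : (u - x) * A + (v - y) * B < 0 := by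
  rcases le_or_gt v y with hvy | hyv
  · exact add_neg_of_neg_of_nonpos (mul_neg_of_neg_of_pos (sub_neg.2 hux) hA)
      (mul_nonpos_of_nonpos_of_nonneg (sub_nonpos.2 hvy) hB)
  · calc (u - x) * A + (v - y) * B
      _ < (u - x) * A + (v - y) * A := by
        gcongr
        exact hBA hyv
      _ = (u + v - (x + y)) * A := by ring
      _ ≤ 0 := mul_nonpos_of_nonpos_of_nonneg (sub_nonpos.2 hsum) hA.le

theorem combo_swap_mem_openSegment {𝕜 E : Type*} [Field 𝕜] [LinearOrder 𝕜]
    [IsStrictOrderedRing 𝕜] [AddCommGroup E] [Module 𝕜 E] {θ : 𝕜} (hθ : θ ∈ Ioo (1 / 2) 1)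
    (x y : E) : (1 - θ) • x + θ • y ∈ openSegment 𝕜 y ((1 - θ) • y + θ • x) := by
  obtain ⟨hθ_half, hθ_one⟩ := hθ
  have hθ_pos : 0 < θ := by linarith
  refine ⟨(2 * θ - 1) / θ, (1 - θ) / θ, div_pos (by linarith) hθ_pos,
    div_pos (by linarith) hθ_pos, by field_simp; ring, ?_⟩
  match_scalars <;> field_simp
  ring

section Seminormed

variable {E : Type*} [SeminormedAddCommGroup E] [NormedSpace ℝ E] {θ : ℝ}

theorem norm_combo_add_norm_combo_swap_le (hθ : θ ∈ Icc (0 : ℝ) 1) (x y : E) :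
    ‖(1 - θ) • y + θ • x‖ + ‖(1 - θ) • x + θ • y‖ ≤ ‖x‖ + ‖y‖ := by
  have norm_combo_le (z w : E) : ‖(1 - θ) • z + θ • w‖ ≤ (1 - θ) * ‖z‖ + θ * ‖w‖ :=
    convexOn_univ_norm.2 (mem_univ z) (mem_univ w) (sub_nonneg.2 hθ.2) hθ.1 (sub_add_cancel 1 θ)
  linarith [norm_combo_le y x, norm_combo_le x y]

theorem norm_combo_swap_lt_norm_combo (hθ : θ ∈ Ioo (1 / 2 : ℝ) 1) {x y : E}
    (h : ‖y‖ < ‖(1 - θ) • x + θ • y‖) :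
    ‖(1 - θ) • x + θ • y‖ < ‖(1 - θ) • y + θ • x‖ :=
  convexOn_univ_norm.lt_right_of_left_lt (mem_univ _) (mem_univ _)
    (combo_swap_mem_openSegment hθ x y) h

end Seminormed

theorem combo_ne_zero_of_norm_le {E : Type*} [NormedAddCommGroup E] [NormedSpace ℝ E] {x y : E}
    {θ : ℝ} (hθ : 1 / 2 < θ) (hyx : ‖y‖ ≤ ‖x‖) (hxy : x ≠ y) : (1 - θ) • y + θ • x ≠ 0 := by
  intro hzero
  have hx_pos : 0 < ‖x‖ := by
    by_contra! hx
    exact hxy ((norm_le_zero_iff.1 hx).trans (norm_le_zero_iff.1 (hyx.trans hx)).symm)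
  have habs : |1 - θ| < θ := abs_lt.2 ⟨by linarith, by linarith⟩
  have hnorm : |1 - θ| * ‖y‖ = θ * ‖x‖ := by
    simpa [norm_smul, abs_of_pos ((abs_nonneg _).trans_lt habs)] using
      congrArg norm (eq_neg_of_add_eq_zero_left hzero)
  have : |1 - θ| * ‖y‖ < θ * ‖x‖ := by
    calc |1 - θ| * ‖y‖ ≤ |1 - θ| * ‖x‖ := by gcongr
      _ < θ * ‖x‖ := by gcongr
  exact this.ne hnorm

theorem fidelity_strict_decrease_general {E : Type*} [NormedAddCommGroup E] [NormedSpace ℝ E]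
    [StrictConvexSpace ℝ E] {φ : ℝ → ℝ} (hφ : StrictMonoOn φ (Ici 0)) (hφ_zero : 0 ≤ φ 0)
    {θ : ℝ} (hθ : θ ∈ Ioo (1 / 2 : ℝ) 1) {x y : E} (hxy : x ≠ y) :
    (‖(1 - θ) • y + θ • x‖ - ‖x‖) * φ ‖(1 - θ) • y + θ • x‖ +
      (‖(1 - θ) • x + θ • y‖ - ‖y‖) * φ ‖(1 - θ) • x + θ • y‖ < 0 := by
  wlog hyx : ‖y‖ ≤ ‖x‖ generalizing x y
  · rw [add_comm]
    exact this hxy.symm (le_of_not_ge hyx)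
  have hθ_pos : 0 < θ := by linarith [hθ.1]
  have hu_lt : ‖(1 - θ) • y + θ • x‖ < ‖x‖ :=
    norm_combo_lt_of_ne hyx le_rfl hxy.symm (sub_pos.2 hθ.2) hθ_pos (sub_add_cancel 1 θ)
  have hu_pos : 0 < ‖(1 - θ) • y + θ • x‖ :=
    norm_pos_iff.2 (combo_ne_zero_of_norm_le hθ.1 hyx hxy)
  refine sub_mul_add_sub_mul_neg hu_lt
    (norm_combo_add_norm_combo_swap_le ⟨hθ_pos.le, hθ.2.le⟩ x y) ?_ ?_ fun hyv ↦ ?_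
  · exact hφ_zero.trans_lt (hφ self_mem_Ici hu_pos.le hu_pos)
  · exact hφ_zero.trans (hφ.monotoneOn self_mem_Ici (norm_nonneg _) (norm_nonneg _))
  · exact hφ (norm_nonneg _) (norm_nonneg _) (norm_combo_swap_lt_norm_combo hθ hyv)

/-- The key real-variable estimate behind the strict fidelity decrease for
`p`-increasing fidelities with `p > 1` (Lemma `phi-const-approx`). -/
theorem fidelity_strict_decrease (p a bp bm : ℝ) (hp : 1 < p) (hne : bp ≠ bm) :
    ∃ θ ∈ Set.Ioo (0 : ℝ) 1,
      (|(1 - θ) * (bm - a) + θ * (bp - a)| - |bp - a|) *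
          |(1 - θ) * (bm - a) + θ * (bp - a)| ^ (p - 1) +
        (|(1 - θ) * (bp - a) + θ * (bm - a)| - |bm - a|) *
          |(1 - θ) * (bp - a) + θ * (bm - a)| ^ (p - 1) < 0 := by
  refine ⟨3 / 4, by norm_num, ?_⟩
  exact fidelity_strict_decrease_general (Real.strictMonoOn_rpow_Ici_of_exponent_pos (sub_pos.2 hp))
    (Real.rpow_nonneg le_rfl _) (by norm_num) (sub_left_injective.ne hne)
end

section
/- Let n ≥ 1 and let p, q ∈ ℝⁿ (with the Euclidean inner product and norm) and ρ ∈ ℝ. Then ρ·⟨p, q⟩/√(1+‖p‖²) ≤ √(1+‖p+ρq‖²) − √(1+‖p‖²) ≤ ρ·⟨p, q⟩/√(1+‖p‖²) + ρ²·‖q‖²/√(1+‖p‖²). -/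
open scoped RealInnerProductSpace

theorem sqrt_sub_sqrt_le_sub_div {x y : ℝ} (hx : 0 < x) (hy : 0 ≤ y) :
    √y - √x ≤ (y - x) / (2 * √x) := by
  have am_gm : 2 * √y * √x ≤ y + x := by
    simpa only [Real.sq_sqrt hy, Real.sq_sqrt hx.le] using two_mul_le_add_sq √y √x
  rw [le_div_iff₀ (by positivity)]
  linarith [Real.mul_self_sqrt hx.le]

section InnerProductSpace

variable {E : Type*} [SeminormedAddCommGroup E] [InnerProductSpace ℝ E] {a : ℝ}

/- This is the Cauchy–Schwarz inequality for the vectors `(√a, p)` and `(√a, w)` of the Hilbert sum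
`ℝ ⊕ E`. -/
theorem add_inner_le_sqrt_add_norm_sq_mul_sqrt_add_norm_sq (ha : 0 ≤ a) (p w : E) :
    a + ⟪p, w⟫ ≤ √(a + ‖p‖ ^ 2) * √(a + ‖w‖ ^ 2) := by
  have sq_le : (a + ‖p‖ * ‖w‖) ^ 2 ≤ (a + ‖p‖ ^ 2) * (a + ‖w‖ ^ 2) := by
    linarith [mul_nonneg ha (sq_nonneg (‖p‖ - ‖w‖))]
  calc
    a + ⟪p, w⟫ ≤ a + ‖p‖ * ‖w‖ := by gcongr; exact real_inner_le_norm p w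
    _ ≤ √((a + ‖p‖ ^ 2) * (a + ‖w‖ ^ 2)) := Real.le_sqrt_of_sq_le sq_le
    _ = √(a + ‖p‖ ^ 2) * √(a + ‖w‖ ^ 2) := Real.sqrt_mul (by positivity) _

theorem inner_div_sqrt_le_sqrt_add_norm_add_sq_sub (ha : 0 < a) (p v : E) :
    ⟪p, v⟫ / √(a + ‖p‖ ^ 2) ≤ √(a + ‖p + v‖ ^ 2) - √(a + ‖p‖ ^ 2) := by
  have cauchy_schwarz := add_inner_le_sqrt_add_norm_sq_mul_sqrt_add_norm_sq ha.le p (p + v)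
  rw [inner_add_right, real_inner_self_eq_norm_sq] at cauchy_schwarz
  have sqrt_mul_self : √(a + ‖p‖ ^ 2) * √(a + ‖p‖ ^ 2) = a + ‖p‖ ^ 2 :=
    Real.mul_self_sqrt (by positivity)
  rw [div_le_iff₀ (by positivity)]
  linarith

theorem sqrt_add_norm_add_sq_sub_le (ha : 0 < a) (p v : E) :
    √(a + ‖p + v‖ ^ 2) - √(a + ‖p‖ ^ 2) ≤
      ⟪p, v⟫ / √(a + ‖p‖ ^ 2) + ‖v‖ ^ 2 / (2 * √(a + ‖p‖ ^ 2)) := by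
  calc
    √(a + ‖p + v‖ ^ 2) - √(a + ‖p‖ ^ 2)
      ≤ (a + ‖p + v‖ ^ 2 - (a + ‖p‖ ^ 2)) / (2 * √(a + ‖p‖ ^ 2)) :=
        sqrt_sub_sqrt_le_sub_div (by positivity) (by positivity)
    _ = ⟪p, v⟫ / √(a + ‖p‖ ^ 2) + ‖v‖ ^ 2 / (2 * √(a + ‖p‖ ^ 2)) := by
        rw [norm_add_sq_real]
        field

theorem sqrt_one_add_sq_sandwich_general (ha : 0 < a) (p q : E) (ρ : ℝ) :
    ρ * ⟪p, q⟫ / √(a + ‖p‖ ^ 2) ≤ √(a + ‖p + ρ • q‖ ^ 2) - √(a + ‖p‖ ^ 2) ∧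
      √(a + ‖p + ρ • q‖ ^ 2) - √(a + ‖p‖ ^ 2) ≤
        ρ * ⟪p, q⟫ / √(a + ‖p‖ ^ 2) + ρ ^ 2 * ‖q‖ ^ 2 / (2 * √(a + ‖p‖ ^ 2)) := by
  have norm_smul_sq : ‖ρ • q‖ ^ 2 = ρ ^ 2 * ‖q‖ ^ 2 := by
    rw [norm_smul, mul_pow, Real.norm_eq_abs, sq_abs]
  rw [← real_inner_smul_right, ← norm_smul_sq]
  exact ⟨inner_div_sqrt_le_sqrt_add_norm_add_sq_sub ha p (ρ • q),
    sqrt_add_norm_add_sq_sub_le ha p (ρ • q)⟩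

end InnerProductSpace

/-- The convexity/concavity sandwich for the area integrand `p ↦ √(1 + ‖p‖²)`:
`ρ⟨p,q⟩/√(1+‖p‖²) ≤ √(1+‖p+ρq‖²) − √(1+‖p‖²) ≤ ρ⟨p,q⟩/√(1+‖p‖²) + ρ²‖q‖²/√(1+‖p‖²)`. -/
theorem sqrt_one_add_sq_sandwich (n : ℕ) (hn : 1 ≤ n)
    (p q : EuclideanSpace ℝ (Fin n)) (ρ : ℝ) :
    ρ * ⟪p, q⟫ / Real.sqrt (1 + ‖p‖ ^ 2) ≤
        Real.sqrt (1 + ‖p + ρ • q‖ ^ 2) - Real.sqrt (1 + ‖p‖ ^ 2) ∧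
      Real.sqrt (1 + ‖p + ρ • q‖ ^ 2) - Real.sqrt (1 + ‖p‖ ^ 2) ≤
        ρ * ⟪p, q⟫ / Real.sqrt (1 + ‖p‖ ^ 2) +
          ρ ^ 2 * ‖q‖ ^ 2 / Real.sqrt (1 + ‖p‖ ^ 2) := by
  refine (sqrt_one_add_sq_sandwich_general one_pos p q ρ).imp_right fun upper => upper.trans ?_
  gcongr; exact le_mul_of_one_le_left (Real.sqrt_nonneg _) one_le_two
end

section
/- Let Ω ⊆ ℝ^m be open and let γ : Ω → Ω be a bijection such that both γ and its inverse γ⁻¹ are Lipschitz and both map Lebesgue-null sets to Lebesgue-null sets. Then for Lebesgue-almost every x ∈ Ω: γ is differentiable at x, γ⁻¹ is differentiable at γ(x), the derivative Dγ(x) is an invertible linear map, and D(γ⁻¹)(γ(x)) = (Dγ(x))⁻¹, i.e. D(γ⁻¹)(γ(x)) ∘ Dγ(x) and Dγ(x) ∘ D(γ⁻¹)(γ(x)) are both the identity on ℝ^m. -/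
open MeasureTheory

/-!
The conclusion holds at every point `x ∈ Ω` at which `γ` is differentiable, and by Rademacher's
theorem this is almost every point. Since `δ` is Lipschitz, `‖γ z - γ x‖ ≥ c ‖z - x‖` for some
`c > 0`, and in the limit `‖A v‖ ≥ c ‖v‖` for `A = Dγ(x)`, so `A` is injective with closed range.
Moreover, `γ ∘ δ = id` and `δ w - δ (γ x) = O(w - γ x)` show that `A ∘ δ` has derivative `id` at
`γ x`, so the range of `A` is dense. Hence `A` is invertible, and a continuous local inverse of a
map with invertible derivative is differentiable.
-/

section LocalInverse

open Asymptotics Filter Topology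

variable {𝕜 E F : Type*} [NontriviallyNormedField 𝕜]
  [NormedAddCommGroup E] [NormedSpace 𝕜 E] [NormedAddCommGroup F] [NormedSpace 𝕜 F]
  {f : E → F} {f' : E →L[𝕜] F} {g : F → E} {x : E} {y : F}

theorem exists_antilipschitzWith_of_hasFDerivAt (hf : HasFDerivAt f f' x)
    (hexp : (· - x) =O[𝓝 x] (f · - f x)) : ∃ K, AntilipschitzWith K f' := by
  obtain ⟨C, hC, hbound⟩ := hexp.exists_nonneg
  lift C to NNReal using hC
  refine ⟨C, f'.antilipschitz_of_bound fun v ↦ ?_⟩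
  have hline : Tendsto (fun t : 𝕜 ↦ x + t • v) (𝓝[≠] 0) (𝓝 x) := by
    have hcont : Continuous fun t : 𝕜 ↦ x + t • v := by fun_prop
    simpa using (hcont.tendsto 0).mono_left nhdsWithin_le_nhds
  refine ge_of_tendsto ((hf.hasLineDerivAt v).tendsto_slope_zero.norm.const_mul (C : ℝ)) ?_
  filter_upwards [hline.eventually hbound.bound, self_mem_nhdsWithin] with t ht ht_ne
  have ht_pos : 0 < ‖t‖ := norm_pos_iff.2 ht_ne
  rw [add_sub_cancel_left, norm_smul] at ht
  rw [norm_smul, norm_inv, mul_left_comm, ← div_eq_inv_mul, le_div_iff₀' ht_pos]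
  exact ht

theorem continuousAt_of_isBigO_sub (hg : (g · - g y) =O[𝓝 y] (· - y)) : ContinuousAt g y :=
  tendsto_sub_nhds_zero_iff.1 (hg.trans_tendsto (tendsto_sub_nhds_zero_iff.2 tendsto_id))

theorem denseRange_of_hasFDerivAt_of_rightInverse (hf : HasFDerivAt f f' (g y))
    (hg : (g · - g y) =O[𝓝 y] (· - y)) (hfg : ∀ᶠ z in 𝓝 y, f (g z) = z) : DenseRange f' := by
  have hlin : (fun z ↦ f (g z) - f (g y) - f' (g z - g y)) =o[𝓝 y] (· - y) :=
    (hf.isLittleO.comp_tendsto (continuousAt_of_isBigO_sub hg)).trans_isBigO hg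
  have hcomp : HasFDerivAt (f' ∘ g) (ContinuousLinearMap.id 𝕜 F) y := by
    refine .of_isLittleO (hlin.neg_left.congr' ?_ .rfl)
    filter_upwards [hfg] with z hz
    simp [hz, hfg.self_of_nhds]
  intro w
  refine mem_closure_of_tendsto (hcomp.hasLineDerivAt w).tendsto_slope_zero (.of_forall fun t ↦ ?_)
  exact ⟨t⁻¹ • (g (y + t • w) - g y), by simp⟩

theorem exists_continuousLinearEquiv_hasFDerivAt_localInverse [CompleteSpace E] [CompleteSpace F]
    (hf : DifferentiableAt 𝕜 f x) (hg : (g · - g (f x)) =O[𝓝 (f x)] (· - f x))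
    (hgf : ∀ᶠ z in 𝓝 x, g (f z) = z) (hfg : ∀ᶠ w in 𝓝 (f x), f (g w) = w) :
    ∃ A : E ≃L[𝕜] F, HasFDerivAt f (A : E →L[𝕜] F) x ∧
      HasFDerivAt g (A.symm : F →L[𝕜] E) (f x) := by
  obtain ⟨f', hf'⟩ := hf
  have hgfx : g (f x) = x := hgf.self_of_nhds
  have hcont : ContinuousAt g (f x) := continuousAt_of_isBigO_sub hg
  have hexp : (· - x) =O[𝓝 x] (f · - f x) := by
    refine (hg.comp_tendsto hf'.continuousAt).congr' ?_ .rfl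
    filter_upwards [hgf] with z hz
    simp [hz, hgfx]
  have hf'g : HasFDerivAt f f' (g (f x)) := hgfx.symm ▸ hf'
  have hdense : DenseRange f' := denseRange_of_hasFDerivAt_of_rightInverse hf'g hg hfg
  have hanti : ∃ K, AntilipschitzWith K f' := exists_antilipschitzWith_of_hasFDerivAt hf' hexp
  have hbij : Function.Bijective f' := f'.bijective_iff_dense_range_and_antilipschitz.2
    ⟨SetLike.coe_injective hdense.closure_range, hanti⟩
  let A : E ≃L[𝕜] F := .ofBijective f' (LinearMap.ker_eq_bot.2 hbij.1)
    (LinearMap.range_eq_top.2 hbij.2)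
  exact ⟨A, hf', HasFDerivAt.of_local_left_inverse (f' := A) hcont hf'g hfg⟩

end LocalInverse

theorem ae_inverse_function_theorem_general {E F : Type*}
    [NormedAddCommGroup E] [NormedSpace ℝ E] [FiniteDimensional ℝ E]
    [MeasurableSpace E] [BorelSpace E] (μ : Measure E) [μ.IsAddHaarMeasure]
    [NormedAddCommGroup F] [NormedSpace ℝ F] [FiniteDimensional ℝ F]
    {U : Set E} {V : Set F} (hU : IsOpen U) (hV : IsOpen V) {f : E → F} {g : F → E}
    (hfUV : Set.MapsTo f U V) (hgf : Set.LeftInvOn g f U) (hfg : Set.RightInvOn g f V)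
    {Kf Kg : NNReal} (hf : LipschitzOnWith Kf f U) (hg : LipschitzOnWith Kg g V) :
    ∀ᵐ x ∂μ, x ∈ U → ∃ A : E ≃L[ℝ] F,
      HasFDerivAt f (A : E →L[ℝ] F) x ∧ HasFDerivAt g (A.symm : F →L[ℝ] E) (f x) := by
  have : CompleteSpace E := FiniteDimensional.complete ℝ E
  have : CompleteSpace F := FiniteDimensional.complete ℝ F
  filter_upwards [hf.ae_differentiableWithinAt_of_mem (μ := μ)] with x hfx hx
  have hU_nhds : U ∈ nhds x := hU.mem_nhds hx
  have hV_nhds : V ∈ nhds (f x) := hV.mem_nhds (hfUV hx)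
  refine exists_continuousLinearEquiv_hasFDerivAt_localInverse
    ((hfx hx).differentiableAt hU_nhds) (.of_bound Kg ?_)
    (Filter.eventually_of_mem hU_nhds hgf) (Filter.eventually_of_mem hV_nhds hfg)
  filter_upwards [hV_nhds] with w hw
  exact hg.norm_sub_le hw (hfUV hx)

/-- The almost-everywhere inverse function theorem for bi-Lipschitz transformations
with the Lusin `N`-property: for a.e. `x ∈ Ω`, both `γ` and its inverse `δ` are
differentiable (at `x` resp. `γ x`), and the derivatives are mutually inverse. -/
theorem ae_inverse_function_theorem
    (m : ℕ) (Ω : Set (EuclideanSpace ℝ (Fin m))) (hΩ : IsOpen Ω)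
    (γ δ : EuclideanSpace ℝ (Fin m) → EuclideanSpace ℝ (Fin m))
    (hγΩ : Set.MapsTo γ Ω Ω) (hδΩ : Set.MapsTo δ Ω Ω)
    (hinv₁ : ∀ x ∈ Ω, δ (γ x) = x) (hinv₂ : ∀ x ∈ Ω, γ (δ x) = x)
    (Kγ Kδ : NNReal) (hγlip : LipschitzOnWith Kγ γ Ω) (hδlip : LipschitzOnWith Kδ δ Ω)
    (hγN : ∀ s ⊆ Ω, volume s = 0 → volume (γ '' s) = 0)
    (hδN : ∀ s ⊆ Ω, volume s = 0 → volume (δ '' s) = 0) :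
    ∀ᵐ x ∂volume, x ∈ Ω →
      ∃ A B : EuclideanSpace ℝ (Fin m) →L[ℝ] EuclideanSpace ℝ (Fin m),
        HasFDerivAt γ A x ∧ HasFDerivAt δ B (γ x) ∧
        B ∘L A = 1 ∧ A ∘L B = 1 := by
  filter_upwards [ae_inverse_function_theorem_general volume hΩ hΩ hγΩ hinv₁ hinv₂ hγlip hδlip]
    with x h hx
  obtain ⟨A, hA, hAsymm⟩ := h hx
  exact ⟨A, A.symm, hA, hAsymm, A.coe_symm_comp_coe, A.coe_comp_coe_symm⟩
end

section
/- Let ψ : ℝ → ℝ be concave and monotone nondecreasing on [0,∞) with ψ(0) = 0, and suppose ψ(t)/t → L as t → 0⁺ with L ∈ ℝ. Then for every m ≥ 1, all linear maps A, B : ℝ^m → ℝ^m, all scalars c, d ≥ 0 with c + d = 2, and every v ∈ ℝ^m (Euclidean norm): c·ψ(‖A v‖) + d·ψ(‖B v‖) − 2·ψ(‖v‖) ≤ L·max(0, ‖c·A v‖ + ‖d·B v‖ − 2‖v‖). -/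
/-!
Among all slopes of a concave function on `[0, ∞)`, the slope at the origin is the largest, so `ψ`
increases from `‖v‖` to any larger `s` by at most `L * (s - ‖v‖)`; by monotonicity it does not
increase towards a smaller `s`. Jensen's inequality bounds the weighted mean of `ψ ‖A v‖` and
`ψ ‖B v‖` by `ψ s`, where `s` is the weighted mean of `‖A v‖` and `‖B v‖`.
-/

open Finset Set

section ConcaveIncrements

variable {S : Set ℝ} {f : ℝ → ℝ} {f' x : ℝ}

theorem sub_le_mul_sub_of_concaveOn_of_hasDerivWithinAt_Ioi {y z : ℝ} (hf : ConcaveOn ℝ S f)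
    (hf' : HasDerivWithinAt f f' (Ioi x) x) (hx : x ∈ S) (hz : z ∈ S) (hxy : x ≤ y) (hyz : y < z) :
    f z - f y ≤ f' * (z - y) := by
  have slope_from_x {u : ℝ} (hu : u ∈ S) (hxu : x < u) : (f u - f x) / (u - x) ≤ f' := by
    simpa only [slope_def_field] using hf.slope_le_of_hasDerivWithinAt_Ioi hx hu hxu hf'
  rw [← div_le_iff₀ (sub_pos.2 hyz)]
  rcases hxy.eq_or_lt with rfl | hxy
  · exact slope_from_x hz hyz
  · have hy : y ∈ S := hf.1.ordConnected.out hx hz ⟨hxy.le, hyz.le⟩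
    exact (hf.slope_anti_adjacent hx hz hxy hyz).trans (slope_from_x hy hxy)

theorem sub_le_mul_max_sub_of_concaveOn_of_monotoneOn {y z : ℝ} (hf : ConcaveOn ℝ S f)
    (hmono : MonotoneOn f S) (hf' : HasDerivWithinAt f f' (Ioi x) x) (hx : IsLeast S x)
    (hy : y ∈ S) (hz : z ∈ S) : f z - f y ≤ f' * max 0 (z - y) := by
  rcases le_or_gt z y with hzy | hyz
  · rw [max_eq_left (sub_nonpos.2 hzy), mul_zero]
    exact sub_nonpos.2 (hmono hz hy hzy)
  · rw [max_eq_right (sub_pos.2 hyz).le]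
    exact sub_le_mul_sub_of_concaveOn_of_hasDerivWithinAt_Ioi hf hf' hx.1 hz (hx.2 hy) hyz

theorem sum_mul_sub_le_mul_max_of_concaveOn_of_monotoneOn {ι : Type*} {t : Finset ι} {w p : ι → ℝ}
    {y : ℝ} (hf : ConcaveOn ℝ S f) (hmono : MonotoneOn f S)
    (hf' : HasDerivWithinAt f f' (Ioi x) x) (hx : IsLeast S x) (hw : ∀ i ∈ t, 0 ≤ w i)
    (hp : ∀ i ∈ t, p i ∈ S) (hy : y ∈ S) :
    ∑ i ∈ t, w i * f (p i) - (∑ i ∈ t, w i) * f y ≤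
      f' * max 0 (∑ i ∈ t, w i * p i - (∑ i ∈ t, w i) * y) := by
  set W := ∑ i ∈ t, w i with hW
  have hW_nonneg : 0 ≤ W := sum_nonneg hw
  rcases hW_nonneg.eq_or_lt with hW_zero | hW_pos
  · have hw_zero := (sum_eq_zero_iff_of_nonneg hw).1 hW_zero.symm
    have sum_zero (g : ι → ℝ) : ∑ i ∈ t, w i * g i = 0 :=
      sum_eq_zero fun i hi ↦ by rw [hw_zero i hi, zero_mul]
    simp [sum_zero, ← hW_zero]
  · have mean_eq (g : ι → ℝ) : ∑ i ∈ t, w i * g i = W * t.centerMass w g := by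
      simp only [centerMass, smul_eq_mul, ← hW, mul_inv_cancel_left₀ hW_pos.ne']
    have jensen : t.centerMass w (f ∘ p) ≤ f (t.centerMass w p) :=
      hf.le_map_centerMass hw hW_pos hp
    have increment : f (t.centerMass w p) - f y ≤ f' * max 0 (t.centerMass w p - y) :=
      sub_le_mul_max_sub_of_concaveOn_of_monotoneOn hf hmono hf' hx hy
        (hf.1.centerMass_mem hw hW_pos hp)
    calc ∑ i ∈ t, w i * f (p i) - W * f y
        = W * (t.centerMass w (f ∘ p) - f y) := by rw [mul_sub, ← mean_eq]; rfl
      _ ≤ W * (f' * max 0 (t.centerMass w p - y)) := by gcongr; linarith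
      _ = f' * max 0 (W * (t.centerMass w p - y)) := by
        rw [mul_left_comm, mul_max_of_nonneg _ _ hW_pos.le, mul_zero]
      _ = f' * max 0 (∑ i ∈ t, w i * p i - W * y) := by rw [mul_sub, ← mean_eq]

end ConcaveIncrements

theorem hasDerivWithinAt_Ioi_zero_of_tendsto_div {f : ℝ → ℝ} {f' : ℝ} (hf0 : f 0 = 0)
    (hf' : Filter.Tendsto (fun t ↦ f t / t) (nhdsWithin 0 (Ioi 0)) (nhds f')) :
    HasDerivWithinAt f f' (Ioi 0) 0 := by
  rw [hasDerivWithinAt_iff_tendsto_slope' self_notMem_Ioi]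
  simpa only [slope_fun_def_field, hf0, sub_zero] using hf'

theorem nonconvex_tv_double_lipschitz_estimate_general {ι E F : Type*} [SeminormedAddCommGroup E]
    [NormedSpace ℝ E] [SeminormedAddGroup F] {ψ : ℝ → ℝ} {L : ℝ}
    (hconc : ConcaveOn ℝ (Ici 0) ψ) (hmono : MonotoneOn ψ (Ici 0))
    (hL : HasDerivWithinAt ψ L (Ioi 0) 0) {t : Finset ι} {w : ι → ℝ} (hw : ∀ i ∈ t, 0 ≤ w i)
    (x : ι → E) (v : F) :
    ∑ i ∈ t, w i * ψ ‖x i‖ - (∑ i ∈ t, w i) * ψ ‖v‖ ≤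
      L * max 0 (∑ i ∈ t, ‖w i • x i‖ - (∑ i ∈ t, w i) * ‖v‖) := by
  have norm_smul_eq : ∑ i ∈ t, ‖w i • x i‖ = ∑ i ∈ t, w i * ‖x i‖ :=
    sum_congr rfl fun i hi ↦ norm_smul_of_nonneg (hw i hi) (x i)
  rw [norm_smul_eq]
  exact sum_mul_sub_le_mul_max_of_concaveOn_of_monotoneOn hconc hmono hL isLeast_Ici hw
    (fun i _ ↦ norm_nonneg (x i)) (norm_nonneg v)

/-- The double-Lipschitz comparison estimate for non-convex total variation
energies `TV_ψ` with concave `ψ` (Remark on non-convex total variation). -/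
theorem nonconvex_tv_double_lipschitz_estimate (ψ : ℝ → ℝ) (L : ℝ)
    (hconc : ConcaveOn ℝ (Set.Ici 0) ψ)
    (hmono : MonotoneOn ψ (Set.Ici 0))
    (hψ0 : ψ 0 = 0)
    (hL : Filter.Tendsto (fun t => ψ t / t) (nhdsWithin 0 (Set.Ioi 0)) (nhds L)) :
    ∀ m : ℕ, 1 ≤ m →
      ∀ (A B : EuclideanSpace ℝ (Fin m) →L[ℝ] EuclideanSpace ℝ (Fin m))
        (c d : ℝ), 0 ≤ c → 0 ≤ d → c + d = 2 →
        ∀ v : EuclideanSpace ℝ (Fin m),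
          c * ψ ‖A v‖ + d * ψ ‖B v‖ - 2 * ψ ‖v‖ ≤
            L * max 0 (‖c • A v‖ + ‖d • B v‖ - 2 * ‖v‖) := by
  intro m _ A B c d hc hd hcd v
  have hw : ∀ i ∈ Finset.univ, 0 ≤ ![c, d] i := by simp [Fin.forall_fin_two, hc, hd]
  simpa [Fin.sum_univ_two, hcd] using nonconvex_tv_double_lipschitz_estimate_general hconc hmono
    (hasDerivWithinAt_Ioi_zero_of_tendsto_div hψ0 hL) hw ![A v, B v] v
end
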